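/- arXiv:1701.05212 — 2 statements merged into one kernel-verified Lean document; each statement's English description precedes it below -/
import Mathlib

section
/- For every integer t with 1 ≤ t ≤ 9 there exists a linear code over the field with 32 elements of length 40, dimension 3t, minimum distance at least 40 − (4t + 3) = 37 − 4t, and locality 3. In particular (t = 7), there exists a linear code over the field with 32 elements of length 40, dimension 21, minimum distance at least 9, and locality 3. -/
namespace LRC

open Polynomial

/-- Existence of a generator `α` of `F_32` with `α ^ 5 = α ^ 2 + 1`. -/
theorem exists_alpha : ∃ α : GaloisField 2 5, α ^ 5 + α ^ 2 + 1 = 0 := by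
  classical
  have : Fintype (GaloisField 2 5) := Fintype.ofFinite _
  have hcard : Fintype.card (GaloisField 2 5) = 32 := by
    rw [← Nat.card_eq_fintype_card, GaloisField.card 2 5 (by norm_num)]; norm_num
  have h2 : (2 : GaloisField 2 5) = 0 := CharTwo.two_eq_zero
  by_contra hcon
  push Not at hcon
  let Q : (GaloisField 2 5)[X] := X ^ 27 + (X ^ 24 + X ^ 22 + X ^ 21 + X ^ 18 + X ^ 17 + X ^ 16
    + X ^ 15 + X ^ 14 + X ^ 10 + X ^ 9 + X ^ 7 + X ^ 6 + X ^ 5 + X ^ 3 + X)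
  have hQd : Q.natDegree = 27 := by
    unfold Q; compute_degree!
  have hQ0 : Q = 0 := by
    apply Polynomial.eq_zero_of_natDegree_lt_card_of_eval_eq_zero Q
      (f := (id : GaloisField 2 5 → GaloisField 2 5)) Function.injective_id
    · intro x
      have hx : x ^ 32 = x := by
        have := FiniteField.pow_card x
        rwa [hcard] at this
      have : (x ^ 5 + x ^ 2 + 1) * Q.eval x = 0 := by
        simp only [Q, eval_add, eval_pow, eval_X]
        linear_combination hx + (x^3 + x^5 + x^6 + x^7 + x^8 + x^9 + x^10 + x^11 + x^12 + x^14
          + x^15 + x^16 + x^17 + x^18 + x^19 + x^20 + x^21 + x^22 + x^23 + x^24 + x^26 + x^27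
          + x^29 + x) * h2
      exact (mul_eq_zero.mp this).resolve_left (hcon x)
    · rw [hQd, hcard]; norm_num
  rw [hQ0] at hQd
  simp at hQd

/-- Multiplication by the generator in the bit vector model of `F_32`. -/
def xt (a : BitVec 5) : BitVec 5 := (a <<< 1) ^^^ (bif a.getLsbD 4 then 5#5 else 0#5)

/-- Multiplication in the bit vector model of `F_32`. -/
def mul (a b : BitVec 5) : BitVec 5 :=
  (bif b.getLsbD 0 then a else 0#5) ^^^ (bif b.getLsbD 1 then xt a else 0#5)
  ^^^ (bif b.getLsbD 2 then xt (xt a) else 0#5) ^^^ (bif b.getLsbD 3 then xt (xt (xt a)) else 0#5)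
  ^^^ (bif b.getLsbD 4 then xt (xt (xt (xt a))) else 0#5)

section field
variable {F : Type*} [Field F] [CharP F 2]

/-- Bit to field element. -/
def bt (F : Type*) [Field F] (b : Bool) : F := bif b then 1 else 0

theorem bt_xor (a b : Bool) : bt F (a ^^ b) = bt F a + bt F b := by
  cases a <;> cases b <;> simp [bt, CharTwo.add_self_eq_zero]

/-- The map from bit vectors to the field given by a generator. -/
def ev (α : F) (a : BitVec 5) : F :=
  bt F (a.getLsbD 0) + bt F (a.getLsbD 1) * α + bt F (a.getLsbD 2) * α ^ 2
    + bt F (a.getLsbD 3) * α ^ 3 + bt F (a.getLsbD 4) * α ^ 4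

theorem ev_add (α : F) (a b : BitVec 5) : ev α (a ^^^ b) = ev α a + ev α b := by
  simp only [ev, BitVec.getLsbD_xor, bt_xor]; ring

theorem ev_zero (α : F) : ev α 0#5 = 0 := by
  simp [ev, bt]

theorem ev_one (α : F) : ev α 1#5 = 1 := by
  have h : ∀ i, 1 ≤ i → (1#5).getLsbD i = false := by
    intro i hi; simp; omega
  simp [ev, bt]

theorem ev_bif (α : F) (b : Bool) (a : BitVec 5) :
    ev α (bif b then a else 0#5) = bt F b * ev α a := by
  cases b <;> simp [bt, ev_zero]

theorem ev_xt {α : F} (hα : α ^ 5 + α ^ 2 + 1 = 0) (a : BitVec 5) :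
    ev α (xt a) = ev α a * α := by
  have h2 : (2 : F) = 0 := CharTwo.two_eq_zero
  have h5 : ev α 5#5 = 1 + α ^ 2 := by
    have h0 : (5#5).getLsbD 0 = true := by decide
    have h1 : (5#5).getLsbD 1 = false := by decide
    have h2 : (5#5).getLsbD 2 = true := by decide
    have h3 : (5#5).getLsbD 3 = false := by decide
    have h4 : (5#5).getLsbD 4 = false := by decide
    simp [ev, bt, h0, h1, h2, h3, h4]
  have hs : ev α (a <<< 1) = bt F (a.getLsbD 0) * α + bt F (a.getLsbD 1) * α ^ 2
    + bt F (a.getLsbD 2) * α ^ 3 + bt F (a.getLsbD 3) * α ^ 4 := by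
    simp only [ev, BitVec.getLsbD_shiftLeft]
    simp [bt]
  rw [xt, ev_add, ev_bif, h5, hs, ev]
  linear_combination bt F (a.getLsbD 4) * (-hα + (1 + α ^ 2) * h2)

theorem ev_mul {α : F} (hα : α ^ 5 + α ^ 2 + 1 = 0) (a b : BitVec 5) :
    ev α (mul a b) = ev α a * ev α b := by
  simp only [mul, ev_add, ev_bif, ev_xt hα]
  conv_rhs => rw [ev.eq_1 α b]
  ring

theorem ev_ne_zero {α : F} (hα : α ^ 5 + α ^ 2 + 1 = 0) (a : BitVec 5) (ha : a ≠ 0#5) :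
    ev α a ≠ 0 := by
  have : ∀ a : BitVec 5, a ≠ 0#5 → ∃ b : BitVec 5, mul a b = 1#5 := by decide +kernel
  obtain ⟨b, hb⟩ := this a ha
  intro h0
  have := ev_mul hα a b
  rw [hb, ev_one, h0, zero_mul] at this
  exact one_ne_zero this

theorem ev_inj {α : F} (hα : α ^ 5 + α ^ 2 + 1 = 0) : Function.Injective (ev α) := by
  intro a b hab
  by_contra hne
  refine ev_ne_zero hα (a ^^^ b) ?_ ?_
  · intro h; exact hne (BitVec.xor_eq_zero_iff.mp h)
  · rw [ev_add, hab, CharTwo.add_self_eq_zero]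

end field

/-- The `x`-coordinates of the 40 points, listed coset by coset. -/
def xs (i : Fin 40) : BitVec 5 := #v[2#5, 7, 12, 18, 2, 7, 12, 18, 3, 11, 16, 28, 3, 11, 16, 28, 4,
  9, 21, 26, 4, 9, 21, 26, 5, 13, 15, 23, 5, 13, 15, 23, 17, 24, 27, 31, 17, 24, 27, 31][i]

/-- The `y`-coordinates of the 40 points. -/
def ys (i : Fin 40) : BitVec 5 := #v[28#5, 25, 4, 21, 30, 30, 8, 7, 13, 23, 24, 20, 14, 28, 8, 8,
  19, 21, 19, 10, 23, 28, 6, 16, 27, 7, 24, 29, 30, 10, 23, 10, 2, 22, 21, 7, 19, 14, 14, 24][i]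

/-- The `x`-coordinates of the 10 image points. -/
def us (i : Fin 10) : BitVec 5 := #v[27#5, 27, 4, 4, 2, 2, 16, 16, 13, 13][i]

/-- The `y`-coordinates of the 10 image points. -/
def vs (i : Fin 10) : BitVec 5 := #v[21#5, 14, 23, 19, 30, 28, 24, 8, 7, 10][i]

/-- The coset of a point. -/
def fib (i : Fin 40) : Fin 10 := ⟨i / 4, by omega⟩

/-- The point number `m` in coset `a`. -/
def mk (a : Fin 10) (m : Fin 4) : Fin 40 := ⟨4 * a + m, by omega⟩

/-- The other points in the coset of `i`. -/
def nb (i : Fin 40) (m : Fin 4) : Fin 40 := mk (fib i) ⟨(i + m) % 4, by omega⟩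

theorem curve_xy : ∀ i, mul (ys i) (ys i) ^^^ mul (xs i) (ys i) =
    mul (xs i) (mul (xs i) (xs i)) ^^^ xs i := by decide +kernel

theorem curve_uv : ∀ i, mul (vs i) (vs i) ^^^ mul (us i) (vs i) =
    mul (us i) (mul (us i) (us i)) ^^^ us i := by decide +kernel

theorem xs_ne : ∀ i, xs i ≠ 0#5 ∧ xs i ^^^ 1#5 ≠ 0#5 := by decide +kernel

theorem xy_inj : ∀ i j, xs i = xs j → ys i = ys j → i = j := by decide +kernel

theorem uv_inj : ∀ i j, us i = us j → vs i = vs j → i = j := by decide +kernel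

theorem fib_nb : ∀ i, ∀ m, fib (nb i m) = fib i := by decide +kernel

theorem nb_ne : ∀ i, nb i 1 ≠ i ∧ nb i 2 ≠ i ∧ nb i 3 ≠ i := by decide +kernel

theorem fib_mk : ∀ a, fib (mk a 0) = a := by decide +kernel

theorem det_ne : ∀ i,
    mul (xs (nb i 1) ^^^ xs (nb i 3)) (ys (nb i 2) ^^^ ys (nb i 3)) ^^^
    mul (xs (nb i 2) ^^^ xs (nb i 3)) (ys (nb i 1) ^^^ ys (nb i 3)) ≠ 0#5 := by decide +kernel

theorem u_eq : ∀ i, mul (us (fib i)) (mul (xs i) (mul (xs i ^^^ 1#5) (xs i ^^^ 1#5))) =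
    mul (mul (xs i) (xs i)) (mul (xs i) (xs i)) ^^^ mul (xs i) (xs i) ^^^ 1#5 := by
  decide +kernel

theorem v_eq : ∀ i, mul (vs (fib i)) (mul (mul (xs i) (xs i))
      (mul (xs i ^^^ 1#5) (mul (xs i ^^^ 1#5) (xs i ^^^ 1#5)))) =
    (mul (xs i) (mul (xs i) (xs i)) ^^^ mul (xs i) (xs i) ^^^ xs i) ^^^
    mul ((xs i ^^^ 1#5) ^^^ mul (mul (xs i) (xs i))
      (mul (xs i ^^^ 1#5) (mul (xs i ^^^ 1#5) (xs i ^^^ 1#5)))) (ys i) := by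
  decide +kernel


section zeros
variable {F : Type*} [Field F] [CharP F 2]

/-- The norm of `A + B y` down to `F[x]`. -/
noncomputable def nrm (A B : F[X]) : F[X] := A ^ 2 + A * B * X + B ^ 2 * (X ^ 3 + X)

theorem nrm_ne_zero (A B : F[X]) (h : A ≠ 0 ∨ B ≠ 0) : nrm A B ≠ 0 := by
  intro h0
  unfold nrm at h0
  by_cases hB : B = 0
  · subst hB
    simp at h0 h
    exact h h0
  have hc : (X ^ 3 + X : F[X]).natDegree = 3 := by compute_degree!
  have hc0 : (X ^ 3 + X : F[X]) ≠ 0 := by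
    intro h; rw [h] at hc; simp at hc
  have hd : (B ^ 2 * (X ^ 3 + X)).natDegree = 2 * B.natDegree + 3 := by
    rw [natDegree_mul (pow_ne_zero _ hB) hc0, natDegree_pow, hc]
  have hA2 : (A ^ 2).natDegree = 2 * A.natDegree := natDegree_pow _ _
  have hABX : (A * B * X).natDegree ≤ A.natDegree + B.natDegree + 1 := by
    refine natDegree_mul_le.trans ?_
    have := natDegree_mul_le (p := A) (q := B)
    have := natDegree_X_le (R := F)
    omega
  by_cases hle : A.natDegree ≤ B.natDegree + 1
  · have e : B ^ 2 * (X ^ 3 + X) = -(A ^ 2 + A * B * X) := by linear_combination h0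
    have := natDegree_add_le (A ^ 2) (A * B * X)
    rw [e, natDegree_neg] at hd
    rw [hd] at this
    rcases le_max_iff.mp this with h | h <;> omega
  · have e : A ^ 2 = -(B ^ 2 * (X ^ 3 + X) + A * B * X) := by linear_combination h0
    have := natDegree_add_le (B ^ 2 * (X ^ 3 + X)) (A * B * X)
    rw [e, natDegree_neg] at hA2
    rw [hA2] at this
    rcases le_max_iff.mp this with h | h <;> omega

theorem nrm_natDegree_le (A B : F[X]) (d : ℕ) (hA : 2 * A.natDegree ≤ d)
    (hB : B ≠ 0 → 2 * B.natDegree + 3 ≤ d) : (nrm A B).natDegree ≤ d := by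
  unfold nrm
  by_cases hB0 : B = 0
  · subst hB0
    simpa [natDegree_pow] using hA
  have hB := hB hB0
  refine natDegree_add_le_of_degree_le (natDegree_add_le_of_degree_le ?_ ?_) ?_
  · rw [natDegree_pow]; exact hA
  · refine natDegree_mul_le.trans ?_
    have := natDegree_mul_le (p := A) (q := B)
    have := natDegree_X_le (R := F)
    omega
  · refine natDegree_mul_le.trans ?_
    have hc : (X ^ 3 + X : F[X]).natDegree ≤ 3 := by compute_degree
    rw [natDegree_pow]
    omega

theorem zeros_le {ι : Type*} [Fintype ι] [DecidableEq F] (x y : ι → F)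
    (hc : ∀ i, y i ^ 2 + x i * y i = x i ^ 3 + x i)
    (hinj : ∀ i j, x i = x j → y i = y j → i = j)
    (A B : F[X]) (h : A ≠ 0 ∨ B ≠ 0) (d : ℕ) (hA : 2 * A.natDegree ≤ d)
    (hB : B ≠ 0 → 2 * B.natDegree + 3 ≤ d) :
    (Finset.univ.filter (fun i => A.eval (x i) + B.eval (x i) * y i = 0)).card ≤ d := by
  classical
  have h2 : (2 : F) = 0 := CharTwo.two_eq_zero
  set S := Finset.univ.filter (fun i => A.eval (x i) + B.eval (x i) * y i = 0) with hS
  have hN := nrm_ne_zero A B h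
  have key : ∀ i ∈ S, (nrm A B).IsRoot (x i) := by
    intro i hi
    have hi : A.eval (x i) + B.eval (x i) * y i = 0 := by simpa [hS] using hi
    simp only [nrm, IsRoot.def, eval_add, eval_mul, eval_pow, eval_X]
    linear_combination (A.eval (x i) + B.eval (x i) * (y i + x i)) * hi - B.eval (x i) ^ 2 * hc i
      - (A.eval (x i) * B.eval (x i) * y i) * h2
  have hsum : S.card = ∑ a ∈ S.image x, (S.filter (fun i => x i = a)).card :=
    Finset.card_eq_sum_card_image x S
  have hle : ∀ a ∈ S.image x, (S.filter (fun i => x i = a)).card ≤ (nrm A B).roots.count a := by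
    intro a ha
    obtain ⟨i, hi, rfl⟩ := Finset.mem_image.mp ha
    rw [count_roots]
    by_cases hone : (S.filter (fun j => x j = x i)).card ≤ 1
    · exact hone.trans ((rootMultiplicity_pos hN).mpr (key i hi))
    · push Not at hone
      obtain ⟨j, hj, k, hk, hjk⟩ := Finset.one_lt_card.mp hone
      simp only [Finset.mem_filter, hS, Finset.mem_univ, true_and] at hj hk
      obtain ⟨hj, hjx⟩ := hj
      obtain ⟨hk, hkx⟩ := hk
      rw [hjx] at hj
      rw [hkx] at hk
      have hyne : y j - y k ≠ 0 := by
        intro h0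
        exact hjk (hinj j k (hjx.trans hkx.symm) (sub_eq_zero.mp h0))
      have hB0 : B.eval (x i) = 0 := by
        have : B.eval (x i) * (y j - y k) = 0 := by linear_combination hj - hk
        exact (mul_eq_zero.mp this).resolve_right hyne
      have hA0 : A.eval (x i) = 0 := by
        rw [hB0] at hj; simpa using hj
      obtain ⟨A', hA'⟩ := dvd_iff_isRoot.mpr hA0
      obtain ⟨B', hB'⟩ := dvd_iff_isRoot.mpr hB0
      have hm : 2 ≤ (nrm A B).rootMultiplicity (x i) := by
        rw [le_rootMultiplicity_iff hN]
        refine ⟨nrm A' B', ?_⟩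
        unfold nrm
        rw [hA', hB']
        ring
      refine le_trans ?_ hm
      have : (S.filter (fun j => x j = x i)).card ≤ ({y i, y i + x i} : Finset F).card := by
        apply Finset.card_le_card_of_injOn y
        · intro l hl
          have hl : x l = x i := (Finset.mem_filter.mp hl).2
          have e : (y l - y i) * (y l - (y i + x i)) = 0 := by
            have h1 := hc l
            rw [hl] at h1
            linear_combination h1 - hc i + (- y l * y i - x i * y l + x i * y i + y i ^ 2) * h2
          rcases mul_eq_zero.mp e with e | e
          · simp [sub_eq_zero.mp e]
          · simp [sub_eq_zero.mp e]
        · intro l hl m hm hy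
          exact hinj l m ((Finset.mem_filter.mp hl).2.trans (Finset.mem_filter.mp hm).2.symm) hy
      exact this.trans Finset.card_le_two
  calc S.card ≤ ∑ a ∈ S.image x, (nrm A B).roots.count a := hsum ▸ Finset.sum_le_sum hle
    _ ≤ ∑ a ∈ (nrm A B).roots.toFinset, (nrm A B).roots.count a := by
        apply Finset.sum_le_sum_of_subset
        intro a ha
        obtain ⟨i, hi, rfl⟩ := Finset.mem_image.mp ha
        simpa [hN] using key i hi
    _ = (nrm A B).roots.card := Multiset.toFinset_sum_count_eq _
    _ ≤ (nrm A B).natDegree := card_roots' _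
    _ ≤ d := nrm_natDegree_le A B d hA hB

end zeros

section code
variable {F : Type*} [Field F]

/-- The facts about the 40 evaluation points and their 10 images that the construction uses. -/
structure Config (x y : Fin 40 → F) (u v : Fin 10 → F) : Prop where
  curve_xy : ∀ i, y i ^ 2 + x i * y i = x i ^ 3 + x i
  curve_uv : ∀ i, v i ^ 2 + u i * v i = u i ^ 3 + u i
  x_ne : ∀ i, x i ≠ 0 ∧ x i + 1 ≠ 0
  xy_inj : ∀ i j, x i = x j → y i = y j → i = j
  uv_inj : ∀ i j, u i = u j → v i = v j → i = j
  det_ne : ∀ i, (x (nb i 1) + x (nb i 3)) * (y (nb i 2) + y (nb i 3)) +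
    (x (nb i 2) + x (nb i 3)) * (y (nb i 1) + y (nb i 3)) ≠ 0
  u_eq : ∀ i, u (fib i) * (x i * (x i + 1) ^ 2) = x i ^ 4 + x i ^ 2 + 1
  v_eq : ∀ i, v (fib i) * (x i ^ 2 * (x i + 1) ^ 3) = (x i ^ 3 + x i ^ 2 + x i) +
    ((x i + 1) + x i ^ 2 * (x i + 1) ^ 3) * y i

theorem config_of_alpha [CharP F 2] {α : F} (hα : α ^ 5 + α ^ 2 + 1 = 0) :
    Config (fun i => ev α (xs i)) (fun i => ev α (ys i)) (fun i => ev α (us i))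
      (fun i => ev α (vs i)) where
  curve_xy i := by
    have := congrArg (ev α) (curve_xy i)
    simp only [ev_add, ev_mul hα] at this
    linear_combination this
  curve_uv i := by
    have := congrArg (ev α) (curve_uv i)
    simp only [ev_add, ev_mul hα] at this
    linear_combination this
  x_ne i := by
    refine ⟨ev_ne_zero hα _ (xs_ne i).1, ?_⟩
    have := ev_ne_zero hα _ (xs_ne i).2
    rwa [ev_add, ev_one] at this
  xy_inj i j h1 h2 := xy_inj i j (ev_inj hα h1) (ev_inj hα h2)
  uv_inj i j h1 h2 := uv_inj i j (ev_inj hα h1) (ev_inj hα h2)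
  det_ne i := by
    have := ev_ne_zero hα _ (det_ne i)
    simpa only [ev_add, ev_mul hα] using this
  u_eq i := by
    have := congrArg (ev α) (u_eq i)
    simp only [ev_add, ev_mul hα, ev_one] at this
    linear_combination this
  v_eq i := by
    have := congrArg (ev α) (v_eq i)
    simp only [ev_add, ev_mul hα, ev_one] at this
    linear_combination this

/-- `g` is the restriction of a function `A(x) + B(x) y` with a pole of order at most `d` at
infinity, vanishing at `(0, 0)` if `t` is odd. -/
def Rep (x y : Fin 40 → F) (t d : ℕ) (g : Fin 40 → F) : Prop :=
  ∃ A B : F[X], 2 * A.natDegree ≤ d ∧ 2 * B.natDegree + 3 ≤ d ∧ (Odd t → A.eval 0 = 0) ∧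
    ∀ i, g i = A.eval (x i) + B.eval (x i) * y i

variable {x y : Fin 40 → F} {u v : Fin 10 → F} {t d : ℕ} {g h : Fin 40 → F}

theorem Rep.zero (hd : 3 ≤ d) : Rep x y t d 0 :=
  ⟨0, 0, by simp, by simpa using hd, by simp, by simp⟩

theorem Rep.add (hg : Rep x y t d g) (hh : Rep x y t d h) : Rep x y t d (g + h) := by
  obtain ⟨A, B, hA, hB, h0, hv⟩ := hg
  obtain ⟨A', B', hA', hB', h0', hv'⟩ := hh
  refine ⟨A + A', B + B', ?_, ?_, ?_, ?_⟩
  · have := natDegree_add_le A A'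
    rcases le_max_iff.mp this with h | h <;> omega
  · have := natDegree_add_le B B'
    rcases le_max_iff.mp this with h | h <;> omega
  · intro ht; simp [h0 ht, h0' ht]
  · intro i
    simp only [Pi.add_apply, hv, hv', eval_add]; ring

theorem Rep.smul (c : F) (hg : Rep x y t d g) : Rep x y t d (c • g) := by
  obtain ⟨A, B, hA, hB, h0, hv⟩ := hg
  refine ⟨C c * A, C c * B, ?_, ?_, ?_, ?_⟩
  · have := natDegree_C_mul_le c A
    omega
  · have := natDegree_C_mul_le c B
    omega
  · intro ht; simp [h0 ht]
  · intro i
    simp only [Pi.smul_apply, smul_eq_mul, hv, eval_mul, eval_C]; ring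

theorem Rep.mono {d' : ℕ} (hg : Rep x y t d g) (hd : d ≤ d') : Rep x y t d' g := by
  obtain ⟨A, B, hA, hB, h0, hv⟩ := hg
  exact ⟨A, B, by omega, by omega, h0, hv⟩

theorem Rep.mul_x (hg : Rep x y t d g) : Rep x y t (d + 3) (fun i => g i * x i) := by
  obtain ⟨A, B, hA, hB, h0, hv⟩ := hg
  have hX := natDegree_X_le (R := F)
  refine ⟨A * X, B * X, ?_, ?_, ?_, ?_⟩
  · have := natDegree_mul_le (p := A) (q := X)
    omega
  · have := natDegree_mul_le (p := B) (q := X)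
    omega
  · intro ht; simp
  · intro i
    simp only [hv, eval_mul, eval_X]; ring

theorem Rep.mul_y [CharP F 2] (H : Config x y u v) (hg : Rep x y t d g) :
    Rep x y t (d + 3) (fun i => g i * y i) := by
  have h2 : (2 : F) = 0 := CharTwo.two_eq_zero
  obtain ⟨A, B, hA, hB, h0, hv⟩ := hg
  have hX := natDegree_X_le (R := F)
  have hc : (X ^ 3 + X : F[X]).natDegree ≤ 3 := by compute_degree
  refine ⟨B * (X ^ 3 + X), A + B * X, ?_, ?_, ?_, ?_⟩
  · have := natDegree_mul_le (p := B) (q := X ^ 3 + X)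
    omega
  · have h1 := natDegree_mul_le (p := B) (q := X)
    have := natDegree_add_le A (B * X)
    rcases le_max_iff.mp this with h | h <;> omega
  · intro ht; simp
  · intro i
    simp only [hv, eval_mul, eval_X, eval_add, eval_pow]
    linear_combination eval (x i) B * H.curve_xy i - (eval (x i) B * x i * y i) * h2

/-- The common denominator. -/
def den (t : ℕ) (a : F) : F := a ^ ((t + 1) / 2) * (a + 1) ^ t

theorem natDegree_M (i a b : ℕ) :
    ((X ^ 4 + X ^ 2 + 1) ^ i * X ^ a * (X + 1) ^ b : F[X]).natDegree ≤ 4 * i + a + b := by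
  have h4 : (X ^ 4 + X ^ 2 + 1 : F[X]).natDegree ≤ 4 := by compute_degree
  have h1 : (X + 1 : F[X]).natDegree ≤ 1 := by compute_degree
  have e1 := natDegree_pow_le_of_le i h4
  have e2 := natDegree_pow_le_of_le b h1
  have e3 := natDegree_X_pow_le (R := F) a
  have e4 := natDegree_mul_le_of_le (natDegree_mul_le_of_le e1 e3) e2
  omega

theorem rep_u (H : Config x y u v) (ht : 1 ≤ t) (i : ℕ) (hi : 2 * i ≤ t) :
    Rep x y t (4 * t + t % 2) (fun j => den t (x j) * u (fib j) ^ i) := by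
  obtain ⟨h', hh⟩ := Nat.exists_eq_add_of_le (show i ≤ (t + 1) / 2 by omega)
  obtain ⟨t', htt⟩ := Nat.exists_eq_add_of_le hi
  refine ⟨(X ^ 4 + X ^ 2 + 1) ^ i * X ^ h' * (X + 1) ^ t', 0, ?_, ?_, ?_, ?_⟩
  · have := natDegree_M (F := F) i h' t'
    omega
  · simp; omega
  · rintro ⟨k, hk⟩
    have : h' ≠ 0 := by omega
    simp [this]
  · intro j
    have e := H.u_eq j
    simp only [eval_mul, eval_pow, eval_add, eval_X, eval_one, eval_zero, zero_mul, add_zero]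
    rw [← e, den, hh, mul_pow, mul_pow, ← pow_mul]
    have hp : (x j + 1) ^ t = (x j + 1) ^ (2 * i + t') := congrArg _ htt
    rw [hp]
    ring

theorem rep_uv (H : Config x y u v) (i : ℕ) (hi : 2 * i + 3 ≤ t) :
    Rep x y t (4 * t + t % 2) (fun j => den t (x j) * (u (fib j) ^ i * v (fib j))) := by
  obtain ⟨h', hh⟩ := Nat.exists_eq_add_of_le (show i + 2 ≤ (t + 1) / 2 by omega)
  obtain ⟨t', htt⟩ := Nat.exists_eq_add_of_le hi
  have hM := natDegree_M (F := F) i h' t'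
  have hV0 : (X ^ 3 + X ^ 2 + X : F[X]).natDegree ≤ 3 := by compute_degree
  have hV1 : ((X + 1) + X ^ 2 * (X + 1) ^ 3 : F[X]).natDegree ≤ 5 := by compute_degree
  have hA := natDegree_mul_le_of_le hV0 hM
  have hB := natDegree_mul_le_of_le hV1 hM
  refine ⟨(X ^ 3 + X ^ 2 + X) * ((X ^ 4 + X ^ 2 + 1) ^ i * X ^ h' * (X + 1) ^ t'),
    ((X + 1) + X ^ 2 * (X + 1) ^ 3) * ((X ^ 4 + X ^ 2 + 1) ^ i * X ^ h' * (X + 1) ^ t'),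
    ?_, ?_, ?_, ?_⟩
  · omega
  · omega
  · intro _
    simp
  · intro j
    have e := H.u_eq j
    have e' := H.v_eq j
    simp only [eval_mul, eval_pow, eval_add, eval_X, eval_one]
    rw [← e, den, hh, mul_pow, mul_pow, ← pow_mul]
    have hp : (x j + 1) ^ t = (x j + 1) ^ (2 * i + 3 + t') := congrArg _ htt
    rw [hp]
    linear_combination u (fib j) ^ i * (x j ^ i * (x j + 1) ^ (2 * i)) * x j ^ h' * (x j + 1) ^ t' * e'

theorem rep_f (H : Config x y u v) (ht : 1 ≤ t) (a b : F[X]) (ha : a ∈ degreeLT F (t / 2 + 1))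
    (hb : b ∈ degreeLT F ((t - 1) / 2)) :
    Rep x y t (4 * t + t % 2)
      (fun j => den t (x j) * (a.eval (u (fib j)) + b.eval (u (fib j)) * v (fib j))) := by
  have e : (fun j => den t (x j) * (a.eval (u (fib j)) + b.eval (u (fib j)) * v (fib j))) =
      (∑ i ∈ a.support, a.coeff i • (fun j => den t (x j) * u (fib j) ^ i)) +
      (∑ i ∈ b.support, b.coeff i • (fun j => den t (x j) * (u (fib j) ^ i * v (fib j)))) := by
    funext j
    simp only [eval_eq_sum, Polynomial.sum, Pi.add_apply, Finset.sum_apply, Pi.smul_apply,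
      smul_eq_mul, mul_add, Finset.mul_sum, Finset.sum_mul]
    congr 1 <;> exact Finset.sum_congr rfl (fun i _ => by ring)
  rw [e]
  rw [mem_degreeLT] at ha hb
  refine Rep.add ?_ ?_
  · refine Finset.sum_induction _ (Rep x y t (4 * t + t % 2)) (fun _ _ => Rep.add)
      (Rep.zero (by omega)) ?_
    intro i hi
    refine Rep.smul _ (rep_u H ht i ?_)
    have := (le_degree_of_mem_supp i hi).trans_lt ha
    have : i < t / 2 + 1 := by exact_mod_cast this
    omega
  · refine Finset.sum_induction _ (Rep x y t (4 * t + t % 2)) (fun _ _ => Rep.add)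
      (Rep.zero (by omega)) ?_
    intro i hi
    refine Rep.smul _ (rep_uv H i ?_)
    have := (le_degree_of_mem_supp i hi).trans_lt hb
    have : i < (t - 1) / 2 := by exact_mod_cast this
    omega

/-- The space of functions on the image curve with pole order at most `t` at infinity. -/
abbrev LL (F : Type*) [Field F] (t : ℕ) : Type _ :=
  (degreeLT F (t / 2 + 1)) × (degreeLT F ((t - 1) / 2))

/-- Value of a function on the image curve. -/
def val (u v : Fin 10 → F) (t : ℕ) (f : LL F t) (a : Fin 10) : F :=
  (f.1 : F[X]).eval (u a) + (f.2 : F[X]).eval (u a) * v a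

/-- The encoding map. -/
def enc (x y : Fin 40 → F) (u v : Fin 10 → F) (t : ℕ) :
    (LL F t × LL F t × LL F t) →ₗ[F] (Fin 40 → F) where
  toFun m i := val u v t m.1 (fib i) + val u v t m.2.1 (fib i) * x i
    + val u v t m.2.2 (fib i) * y i
  map_add' m m' := by
    funext i
    simp [val]; ring
  map_smul' c m := by
    funext i
    simp [val]; ring

theorem fiber_zero [CharP F 2] (H : Config x y u v) (i : Fin 40) (a b c : F)
    (h : ∀ m : Fin 4, m ≠ 0 → a + b * x (nb i m) + c * y (nb i m) = 0) :
    a = 0 ∧ b = 0 ∧ c = 0 := by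
  have h2 : (2 : F) = 0 := CharTwo.two_eq_zero
  have h1 := h 1 (by decide)
  have h2' := h 2 (by decide)
  have h3 := h 3 (by decide)
  have hd := H.det_ne i
  have hb : b = 0 := by
    refine (mul_eq_zero.mp (?_ : b * _ = 0)).resolve_right hd
    linear_combination (y (nb i 2) + y (nb i 3)) * (h1 + h3) + (y (nb i 1) + y (nb i 3)) * (h2' + h3)
      - ((a * y (nb i 1) + a * y (nb i 2) + 2 * a * y (nb i 3))
      + c * (y (nb i 1) + y (nb i 3)) * (y (nb i 2) + y (nb i 3))) * h2
  have hc : c = 0 := by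
    refine (mul_eq_zero.mp (?_ : c * _ = 0)).resolve_right hd
    linear_combination (x (nb i 1) + x (nb i 3)) * (h2' + h3) + (x (nb i 2) + x (nb i 3)) * (h1 + h3)
      - ((a * x (nb i 1) + a * x (nb i 2) + 2 * a * x (nb i 3))
      + b * (x (nb i 1) + x (nb i 3)) * (x (nb i 2) + x (nb i 3))) * h2
  refine ⟨?_, hb, hc⟩
  rw [hb, hc] at h1
  simpa using h1

theorem val_inj [CharP F 2] (H : Config x y u v) (ht9 : t ≤ 9) (f : LL F t)
    (h : ∀ a, val u v t f a = 0) : f = 0 := by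
  classical
  by_contra hf
  obtain ⟨⟨A, hA⟩, ⟨B, hB⟩⟩ := f
  have hne : A ≠ 0 ∨ B ≠ 0 := by
    by_contra hcon
    push Not at hcon
    apply hf
    ext1 <;> ext1
    · exact hcon.1
    · exact hcon.2
  rw [mem_degreeLT] at hA hB
  have hz := zeros_le u v H.curve_uv H.uv_inj A B hne 9
    (by
      by_cases h0 : A = 0
      · simp [h0]
      · rw [degree_eq_natDegree h0] at hA
        have : A.natDegree < t / 2 + 1 := by exact_mod_cast hA
        omega)
    (by
      intro h0
      rw [degree_eq_natDegree h0] at hB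
      have : B.natDegree < (t - 1) / 2 := by exact_mod_cast hB
      omega)
  have h' : ∀ a, A.eval (u a) + B.eval (u a) * v a = 0 := h
  simp [h'] at hz

theorem enc_inj [CharP F 2] (H : Config x y u v) (ht9 : t ≤ 9) :
    Function.Injective (enc x y u v t) := by
  rw [← LinearMap.ker_eq_bot, LinearMap.ker_eq_bot']
  intro m hm
  have key : ∀ a, val u v t m.1 a = 0 ∧ val u v t m.2.1 a = 0 ∧ val u v t m.2.2 a = 0 := by
    intro a
    apply fiber_zero H (mk a 0)
    intro k _
    have := congrFun hm (nb (mk a 0) k)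
    simpa [enc, fib_nb, fib_mk] using this
  ext1
  · exact val_inj H ht9 _ (fun a => (key a).1)
  ext1
  · exact val_inj H ht9 _ (fun a => (key a).2.1)
  · exact val_inj H ht9 _ (fun a => (key a).2.2)

theorem finrank_LL (ht : 1 ≤ t) : Module.finrank F (LL F t × LL F t × LL F t) = 3 * t := by
  have h (n : ℕ) : Module.finrank F (degreeLT F n) = n := by
    rw [(degreeLTEquiv F n).finrank_eq, Module.finrank_fin_fun]
  have hf (n : ℕ) : Module.Finite F (degreeLT F n) := Module.Finite.equiv (degreeLTEquiv F n).symm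
  simp only [LL, Module.finrank_prod, h]
  omega

theorem rep_enc [CharP F 2] (H : Config x y u v) (ht : 1 ≤ t) (m : LL F t × LL F t × LL F t) :
    Rep x y t (4 * t + t % 2 + 3) (fun i => den t (x i) * enc x y u v t m i) := by
  have h0 := rep_f H ht m.1.1 m.1.2 m.1.1.2 m.1.2.2
  have h1 := rep_f H ht m.2.1.1 m.2.1.2 m.2.1.1.2 m.2.1.2.2
  have h2 := rep_f H ht m.2.2.1 m.2.2.2 m.2.2.1.2 m.2.2.2.2
  have := ((h0.mono (show _ ≤ 4 * t + t % 2 + 3 by omega)).add h1.mul_x).add (h2.mul_y H)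
  convert this using 1
  funext i
  simp only [enc, val, LinearMap.coe_mk, AddHom.coe_mk, Pi.add_apply]
  ring

theorem enc_zeros [CharP F 2] [DecidableEq F] (H : Config x y u v) (ht : 1 ≤ t)
    (m : LL F t × LL F t × LL F t) (hm : enc x y u v t m ≠ 0) :
    (Finset.univ.filter (fun i => enc x y u v t m i = 0)).card ≤ 4 * t + 3 := by
  obtain ⟨A, B, hA, hB, h0, hv⟩ := rep_enc H ht m
  have hden : ∀ i, den t (x i) ≠ 0 := fun i =>
    mul_ne_zero (pow_ne_zero _ (H.x_ne i).1) (pow_ne_zero _ (H.x_ne i).2)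
  have hne : A ≠ 0 ∨ B ≠ 0 := by
    by_contra hcon
    push Not at hcon
    apply hm
    funext i
    have := hv i
    simp only [hcon.1, hcon.2, eval_zero, zero_mul, add_zero] at this
    exact (mul_eq_zero.mp this).resolve_left (hden i)
  have hiff : ∀ i, enc x y u v t m i = 0 ↔ A.eval (x i) + B.eval (x i) * y i = 0 := by
    intro i
    rw [← hv i]
    simp [hden i]
  rcases Nat.even_or_odd t with hev | hodd
  · have hz := zeros_le x y H.curve_xy H.xy_inj A B hne _ hA (fun _ => hB)
    simp only [hiff]
    have : t % 2 = 0 := Nat.even_iff.mp hev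
    omega
  · have hz := zeros_le (ι := Option (Fin 40)) (fun o => o.elim 0 x) (fun o => o.elim 0 y)
      (by rintro (_ | i)
          · simp
          · exact H.curve_xy i)
      (by rintro (_ | i) (_ | j)
          · simp
          · intro h _
            exact absurd h.symm (H.x_ne j).1
          · intro h _
            exact absurd h (H.x_ne i).1
          · intro h h'
            rw [H.xy_inj i j h h'])
      A B hne _ hA (fun _ => hB)
    have hsub : Finset.insertNone (Finset.univ.filter (fun i => enc x y u v t m i = 0)) ⊆
        Finset.univ.filter (fun o : Option (Fin 40) =>
          A.eval (o.elim 0 x) + B.eval (o.elim 0 x) * (o.elim 0 y) = 0) := by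
      rintro (_ | i) hi
      · simp [h0 hodd]
      · simp only [Finset.some_mem_insertNone, Finset.mem_filter, Finset.mem_univ, true_and] at hi ⊢
        exact (hiff i).mp hi
    have := (Finset.card_le_card hsub).trans hz
    rw [Finset.card_insertNone] at this
    have : t % 2 = 1 := Nat.odd_iff.mp hodd
    omega

end code

end LRC

theorem exists_LRC_F32_length40 :
    ∀ t : ℕ, 1 ≤ t → t ≤ 9 →
      ∃ C : Submodule (GaloisField 2 5) (Fin 40 → GaloisField 2 5),
        Module.finrank (GaloisField 2 5) C = 3 * t ∧
        (∀ x : Fin 40 → GaloisField 2 5, x ∈ C → x ≠ 0 →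
          37 - 4 * t ≤ Nat.card {i : Fin 40 // x i ≠ 0}) ∧
        (∀ i : Fin 40, ∃ I : Finset (Fin 40), i ∉ I ∧ I.card ≤ 3 ∧
          ∀ x ∈ C, ∀ y ∈ C, (∀ j ∈ I, x j = y j) → x i = y i) := by
  classical
  intro t ht ht9
  obtain ⟨α, hα⟩ := LRC.exists_alpha
  obtain ⟨x, y, u, v, H⟩ : ∃ (x y : Fin 40 → GaloisField 2 5) (u v : Fin 10 → GaloisField 2 5),
    LRC.Config x y u v := ⟨_, _, _, _, LRC.config_of_alpha hα⟩
  refine ⟨LinearMap.range (LRC.enc x y u v t), ?_, ?_, ?_⟩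
  · rw [LinearMap.finrank_range_of_inj (LRC.enc_inj H ht9), LRC.finrank_LL ht]
  · rintro _ ⟨m, rfl⟩ hne
    have hz := LRC.enc_zeros H ht m hne
    rw [Nat.card_eq_fintype_card, Fintype.card_subtype]
    have := Finset.card_filter_add_card_filter_not (s := (Finset.univ : Finset (Fin 40)))
      (fun i => LRC.enc x y u v t m i = 0)
    rw [Finset.card_univ, Fintype.card_fin] at this
    simp only [ne_eq]
    omega
  · intro i
    refine ⟨{LRC.nb i 1, LRC.nb i 2, LRC.nb i 3}, ?_, Finset.card_le_three, ?_⟩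
    · have := LRC.nb_ne i
      simp only [Finset.mem_insert, Finset.mem_singleton, not_or]
      exact ⟨this.1.symm, this.2.1.symm, this.2.2.symm⟩
    · rintro _ ⟨m, rfl⟩ _ ⟨m', rfl⟩ h
      rw [← sub_eq_zero, ← Pi.sub_apply, ← map_sub]
      have hz : ∀ k : Fin 4, k ≠ 0 → LRC.enc x y u v t (m - m') (LRC.nb i k) = 0 := by
        intro k hk
        rw [map_sub, Pi.sub_apply, sub_eq_zero]
        apply h
        fin_cases k <;> simp at hk ⊢
      have := LRC.fiber_zero H i _ _ _ (fun k hk => by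
        have := hz k hk
        simp only [LRC.enc, LinearMap.coe_mk, AddHom.coe_mk, LRC.fib_nb] at this
        exact this)
      simp only [LRC.enc, LinearMap.coe_mk, AddHom.coe_mk]
      rw [this.1, this.2.1, this.2.2]
      ring
end

section
/- For every integer t with 1 ≤ t ≤ 14 there exists a linear code over the field with 31 elements of length 56, dimension 3t, minimum distance at least 56 − 4t, and locality 3. In particular (t = 12), there exists a linear code over the field with 31 elements of length 56, dimension 36, minimum distance at least 8, and locality 3. -/
open Polynomial

namespace LRC31

theorem fact31 : Fact (Nat.Prime 31) := ⟨by norm_num⟩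

attribute [local instance] fact31

/-- The base field. -/
abbrev F := ZMod 31

/-- The curve is `L(s) (x^4 + 1) = M(s) x^2`, of bidegree (4,2) in (x,s). -/
noncomputable def L : F[X] := 2 * X - 12
noncomputable def M : F[X] := 8 - 4 * X - X ^ 2

noncomputable def P (a c : F[X]) : F[X] := a ^ 2 - c ^ 2
noncomputable def Q (a b c : F[X]) : F[X] := L * (2 * a * c - b ^ 2) + M * c ^ 2
noncomputable def K (a c : F[X]) : F[X] := L * (a ^ 2 + c ^ 2) + M * (a * c)

/-- The norm of `a + b x + c x^2` from the function field of the curve down to `F(s)`. -/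
noncomputable def R (a b c : F[X]) : F[X] :=
  Q a b c ^ 2 + P a c * Q a b c * M + L ^ 2 * P a c ^ 2

theorem R_eq (a b c : F[X]) : R a b c =
    K a c ^ 2 + b ^ 2 * (L ^ 2 * b ^ 2 - L * ((a ^ 2 + c ^ 2) * M + 4 * a * c * L)) := by
  unfold R Q P K; ring

/-- Fibre parameters. -/
def S : Fin 14 → F := ![2, 4, 5, 7, 9, 10, 11, 13, 15, 16, 19, 24, 27, 29]
def x0 : Fin 14 → F := ![3, 7, 12, 2, 4, 5, 7, 4, 11, 12, 5, 3, 2, 11]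
def x1 : Fin 14 → F := ![21, 9, 13, 16, 8, 25, 9, 8, 17, 13, 25, 21, 16, 17]
/-- The x-coordinates in each fibre. -/
def x (k : Fin 14) : Fin 4 → F := ![x0 k, -x0 k, x1 k, -x1 k]

theorem S_inj : Function.Injective S := by unfold Function.Injective; decide
theorem x_inj : ∀ k, ∀ i j, x k i = x k j → i = j := by decide
theorem x_ne : ∀ k j, x k j ≠ 0 := by decide
theorem x_pair : ∀ k i j, i ≠ j →
    x k i + x k j = 0 ∨ x k i * x k j = 1 ∨ x k i * x k j = -1 := by decide
theorem x_curve : ∀ k j, (2 * S k - 12) * (x k j ^ 4 + 1) = (8 - 4 * S k - S k ^ 2) * x k j ^ 2 := by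
  decide

theorem L_eval (s : F) : L.eval s = 2 * s - 12 := by simp [L]
theorem M_eval (s : F) : M.eval s = 8 - 4 * s - s ^ 2 := by simp [M]

theorem x_curve' (k j) : L.eval (S k) * (x k j ^ 4 + 1) = M.eval (S k) * x k j ^ 2 := by
  rw [L_eval, M_eval]; exact x_curve k j

theorem dvd_of_eval {p : F[X]} {s : F} (h : p.eval s = 0) : (X - C s) ∣ p := dvd_iff_isRoot.2 h

theorem one_zero {a b c : F[X]} {s x : F} (hx : x ≠ 0)
    (hc : L.eval s * (x ^ 4 + 1) = M.eval s * x ^ 2)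
    (h : a.eval s + x * b.eval s + x ^ 2 * c.eval s = 0) : (X - C s) ∣ R a b c := by
  apply dvd_of_eval
  have h2 : x ^ 2 * (R a b c).eval s = 0 := by
    simp only [R, Q, P, eval_add, eval_sub, eval_mul, eval_pow, eval_ofNat]
    generalize L.eval s = l at *
    generalize M.eval s = m at *
    generalize a.eval s = a at *
    generalize b.eval s = b at *
    generalize c.eval s = c at *
    have e1 : (l * (2 * a * c - b ^ 2) + m * c ^ 2) * x ^ 2 + l * (a ^ 2 - c ^ 2) = 0 := by
      linear_combination l * (a - x * b + x ^ 2 * c) * h - c ^ 2 * hc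
    linear_combination ((l * (2 * a * c - b ^ 2) + m * c ^ 2) + l * (a ^ 2 - c ^ 2) * x ^ 2) * e1
      - (a ^ 2 - c ^ 2) * (l * (2 * a * c - b ^ 2) + m * c ^ 2) * hc
  exact (mul_eq_zero.1 h2).resolve_left (pow_ne_zero _ hx)

theorem two_ne : (2 : F) ≠ 0 := by decide

theorem two_zero {a b c : F[X]} {s x y : F} (hx : x ≠ 0) (hxy : x ≠ y)
    (hp : x + y = 0 ∨ x * y = 1 ∨ x * y = -1)
    (hc : L.eval s * (x ^ 4 + 1) = M.eval s * x ^ 2)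
    (h : a.eval s + x * b.eval s + x ^ 2 * c.eval s = 0)
    (h' : a.eval s + y * b.eval s + y ^ 2 * c.eval s = 0) : (X - C s) ^ 2 ∣ R a b c := by
  have hb : b.eval s = - c.eval s * (x + y) := by
    apply mul_left_cancel₀ (sub_ne_zero.2 hxy); linear_combination h - h'
  have ha : a.eval s = c.eval s * (x * y) := by
    linear_combination h - x * hb
  have hx2 := pow_ne_zero 2 hx
  rcases hp with hp | hp
  · have hb0 : (X - C s) ∣ b := dvd_of_eval (by rw [hb, hp]; ring)
    have hK : (X - C s) ∣ K a c := by
      apply dvd_of_eval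
      simp only [K, eval_add, eval_mul, eval_pow]
      have hy : y = -x := by linear_combination hp
      rw [ha, hy]
      linear_combination (c.eval s) ^ 2 * hc
    rw [R_eq]
    exact dvd_add (pow_dvd_pow_of_dvd hK 2) (Dvd.dvd.mul_right (pow_dvd_pow_of_dvd hb0 2) _)
  · have hsq : (x * y) ^ 2 = 1 := by rcases hp with hp | hp <;> rw [hp] <;> ring
    have hP : (X - C s) ∣ P a c := by
      apply dvd_of_eval
      simp only [P, eval_sub, eval_pow]
      rw [ha]
      linear_combination (c.eval s) ^ 2 * hsq
    have hQ : (X - C s) ∣ Q a b c := by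
      apply dvd_of_eval
      apply (mul_eq_zero.1 (?_ : x ^ 2 * _ = 0)).resolve_left hx2
      simp only [Q, eval_add, eval_sub, eval_mul, eval_pow, eval_ofNat]
      rw [ha, hb]
      linear_combination -(c.eval s) ^ 2 * hc - L.eval s * (c.eval s) ^ 2 * hsq
    obtain ⟨p, hp⟩ := hP
    obtain ⟨q, hq⟩ := hQ
    refine ⟨q ^ 2 + p * q * M + L ^ 2 * p ^ 2, ?_⟩
    rw [R, hp, hq]; ring

/-- Three zeros of a quadratic. -/
theorem quad_zero {a b c x y z : F} (hxy : x ≠ y) (hxz : x ≠ z) (hyz : y ≠ z)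
    (h1 : a + x * b + x ^ 2 * c = 0) (h2 : a + y * b + y ^ 2 * c = 0)
    (h3 : a + z * b + z ^ 2 * c = 0) : a = 0 ∧ b = 0 ∧ c = 0 := by
  have e1 : b + (x + y) * c = 0 := by
    apply mul_left_cancel₀ (sub_ne_zero.2 hxy); linear_combination h1 - h2
  have e2 : b + (x + z) * c = 0 := by
    apply mul_left_cancel₀ (sub_ne_zero.2 hxz); linear_combination h1 - h3
  have hc : c = 0 := by
    apply mul_left_cancel₀ (sub_ne_zero.2 hyz); linear_combination e1 - e2
  subst hc
  have hb : b = 0 := by linear_combination e1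
  subst hb
  exact ⟨by linear_combination h1, rfl, rfl⟩

/-- The value at the point `(k, j)`. -/
noncomputable def val (a b c : F[X]) (k : Fin 14) (j : Fin 4) : F :=
  a.eval (S k) + x k j * b.eval (S k) + x k j ^ 2 * c.eval (S k)

theorem fibre_dvd (a b c : F[X]) (k : Fin 14) :
    (X - C (S k)) ^ (Finset.univ.filter fun j => val a b c k j = 0).card ∣ R a b c := by
  set Z := Finset.univ.filter fun j => val a b c k j = 0 with hZ
  have hm : ∀ j ∈ Z, val a b c k j = 0 := fun j hj => (Finset.mem_filter.1 hj).2
  have h4 : Z.card ≤ 4 := by simpa using Finset.card_le_univ Z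
  by_cases h3 : 2 < Z.card
  · obtain ⟨i, hi, j, hj, l, hl, hij, hil, hjl⟩ := Finset.two_lt_card.1 h3
    obtain ⟨ha, hb, hc⟩ := quad_zero (fun h => hij (x_inj k _ _ h)) (fun h => hil (x_inj k _ _ h))
      (fun h => hjl (x_inj k _ _ h)) (hm i hi) (hm j hj) (hm l hl)
    obtain ⟨a', rfl⟩ := dvd_of_eval ha
    obtain ⟨b', rfl⟩ := dvd_of_eval hb
    obtain ⟨c', rfl⟩ := dvd_of_eval hc
    refine (pow_dvd_pow _ h4).trans ⟨R a' b' c', ?_⟩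
    unfold R Q P; ring
  · by_cases h2 : 1 < Z.card
    · obtain ⟨i, hi, j, hj, hij⟩ := Finset.one_lt_card.1 h2
      have : Z.card = 2 := by omega
      rw [this]
      exact two_zero (x_ne k i) (fun h => hij (x_inj k _ _ h)) (x_pair k i j hij)
        (x_curve' k i) (hm i hi) (hm j hj)
    · rcases Nat.eq_zero_or_pos Z.card with h0 | h0
      · rw [h0]; simp
      · have : Z.card = 1 := by omega
        obtain ⟨i, hi⟩ := Finset.card_pos.1 h0
        rw [this, pow_one]
        exact one_zero (x_ne k i) (x_curve' k i) (hm i hi)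

theorem not_square_15 : ∀ u v : F, u ^ 2 = v ^ 2 * 15 → v = 0 := by decide

theorem trailing_sq {A p D : F[X]} (hD : D.coeff 0 = 15) (h : A ^ 2 = p ^ 2 * D) : p = 0 := by
  have h15 : (15 : F) ≠ 0 := by decide
  have hDt : D.trailingCoeff = 15 := by
    have : D.natTrailingDegree = 0 := by
      apply Nat.le_zero.1
      exact natTrailingDegree_le_of_ne_zero (by rw [hD]; exact h15)
    rw [trailingCoeff, this, hD]
  have := congrArg trailingCoeff h
  rw [pow_two, pow_two, trailingCoeff_mul, trailingCoeff_mul, trailingCoeff_mul, hDt, ← pow_two,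
    ← pow_two] at this
  exact trailingCoeff_eq_zero.1 (not_square_15 _ _ this)

theorem odd_sq {A B D : F[X]} (hD : D.natDegree = 3) (hA : A ^ 2 = B ^ 2 * D) : B = 0 := by
  by_contra hB
  have hD0 : D ≠ 0 := by rintro rfl; simp at hD
  have := congrArg natDegree hA
  rw [natDegree_mul (pow_ne_zero _ hB) hD0, natDegree_pow, natDegree_pow, hD] at this
  omega

theorem L_deg : L.natDegree = 1 := by
  have : L = C 2 * X + C (-12) := by
    unfold L; simp only [map_neg, map_ofNat]; ring
  rw [this]; exact natDegree_linear two_ne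

theorem M_form (e : F) : (M + C e * L).natDegree = 2 := by
  have : M + C e * L = C (-1) * X ^ 2 + C (-4 + 2 * e) * X + C (8 - 12 * e) := by
    unfold M L; simp only [map_neg, map_ofNat, map_add, map_mul, map_sub, map_one]; ring
  rw [this]; exact natDegree_quadratic (by decide)

theorem M_deg : M.natDegree = 2 := by simpa using M_form 0

theorem L_ne : L ≠ 0 := by
  intro h; have := L_deg; rw [h] at this; simp at this

theorem case_pm {b c : F[X]} (e : F) (h : L * b ^ 2 = (M + C e * L) * c ^ 2) : b = 0 ∧ c = 0 := by
  have hc : c = 0 := by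
    refine odd_sq (A := L * b) (D := L * (M + C e * L)) ?_ (by linear_combination L * h)
    have hM : M + C e * L ≠ 0 := by
      intro h; have := M_form e; rw [h] at this; simp at this
    rw [natDegree_mul L_ne hM, L_deg, M_form]
  subst hc
  refine ⟨?_, rfl⟩
  have : L * b ^ 2 = 0 := by rw [h]; ring
  simpa [L_ne] using this

theorem R_ne {a b c : F[X]} (h : R a b c = 0) : a = 0 ∧ b = 0 ∧ c = 0 := by
  have hP : P a c = 0 := by
    apply trailing_sq (A := 2 * Q a b c + P a c * M) (D := M ^ 2 - 4 * L ^ 2)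
    · rw [coeff_zero_eq_eval_zero]; simp [L, M]; decide
    · have : Q a b c ^ 2 + P a c * Q a b c * M + L ^ 2 * P a c ^ 2 = 0 := h
      linear_combination 4 * this
  have hQ : Q a b c = 0 := by
    rw [R, hP] at h; simpa using h
  have : (a - c) * (a + c) = 0 := by rw [← hP]; unfold P; ring
  rw [Q] at hQ
  rcases mul_eq_zero.1 this with h1 | h1
  · obtain rfl : a = c := sub_eq_zero.1 h1
    obtain ⟨hb, hc⟩ := case_pm (b := b) (c := a) 2 (by
      rw [map_ofNat]; linear_combination -hQ)
    exact ⟨hc, hb, hc⟩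
  · obtain rfl : a = -c := eq_neg_of_add_eq_zero_left h1
    obtain ⟨hb, hc⟩ := case_pm (b := b) (c := c) (-2) (by
      rw [map_neg, map_ofNat]; linear_combination -hQ)
    exact ⟨by rw [hc]; simp, hb, hc⟩

theorem R_deg {a b c : F[X]} {d : ℕ} (ha : a.natDegree ≤ d) (hb : b.natDegree ≤ d)
    (hc : c.natDegree ≤ d) : (R a b c).natDegree ≤ 4 * (d + 1) := by
  have hL := L_deg.le
  have hM := M_deg.le
  have sq : ∀ {p q : F[X]} {m n : ℕ}, p.natDegree ≤ m → q.natDegree ≤ n →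
    (p * q).natDegree ≤ m + n := fun h h' => natDegree_mul_le_of_le h h'
  have hP : (P a c).natDegree ≤ 2 * d := by
    refine (natDegree_sub_le_of_le (natDegree_pow_le_of_le 2 ha)
      (natDegree_pow_le_of_le 2 hc)).trans ?_
    omega
  have h2 : (2 : F[X]).natDegree ≤ 0 := by
    exact (natDegree_ofNat 2).le
  have hQ : (Q a b c).natDegree ≤ 2 * d + 2 := by
    refine (natDegree_add_le_of_le (sq hL (natDegree_sub_le_of_le (sq (sq h2 ha) hc)
      (natDegree_pow_le_of_le 2 hb))) (sq hM (natDegree_pow_le_of_le 2 hc))).trans ?_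
    omega
  refine (natDegree_add_le_of_le (natDegree_add_le_of_le (natDegree_pow_le_of_le 2 hQ)
    (sq (sq hP hQ) hM)) (sq (natDegree_pow_le_of_le 2 hL) (natDegree_pow_le_of_le 2 hP))).trans ?_
  omega

theorem zeros_le {a b c : F[X]} {d : ℕ} (ha : a.natDegree ≤ d) (hb : b.natDegree ≤ d)
    (hc : c.natDegree ≤ d) (h0 : ¬ (a = 0 ∧ b = 0 ∧ c = 0)) :
    ∑ k, (Finset.univ.filter fun j => val a b c k j = 0).card ≤ 4 * (d + 1) := by
  have hR : R a b c ≠ 0 := fun h => h0 (R_ne h)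
  have hdvd : ∏ k, (X - C (S k)) ^ (Finset.univ.filter fun j => val a b c k j = 0).card
      ∣ R a b c := by
    apply Finset.prod_dvd_of_coprime
    · intro i _ j _ hij
      exact (pairwise_coprime_X_sub_C S_inj hij).pow
    · intro k _; exact fibre_dvd a b c k
  have := (natDegree_le_of_dvd hdvd hR).trans (R_deg ha hb hc)
  rw [natDegree_prod _ _ (fun k _ => pow_ne_zero _ (X_sub_C_ne_zero _))] at this
  simpa [natDegree_pow] using this

/-- Evaluation map. -/
noncomputable def ev (t : ℕ) : (Fin 3 → degreeLT F t) →ₗ[F] (Fin 56 → F) where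
  toFun g i := val (g 0).1 (g 1).1 (g 2).1 (finProdFinEquiv.symm i : Fin 14 × Fin 4).1
    (finProdFinEquiv.symm i : Fin 14 × Fin 4).2
  map_add' g h := by
    funext i; simp [val]; ring
  map_smul' r g := by
    funext i; simp [val]; ring

theorem ev_apply (t : ℕ) (g) (k : Fin 14) (j : Fin 4) :
    ev t g (finProdFinEquiv (k, j) : Fin (14 * 4)) = val (g 0).1 (g 1).1 (g 2).1 k j := by
  show val _ _ _ (finProdFinEquiv.symm (finProdFinEquiv (k, j))).1
    (finProdFinEquiv.symm (finProdFinEquiv (k, j))).2 = _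
  rw [Equiv.symm_apply_apply]

theorem val_zero {a b c : F[X]} {k : Fin 14} (i j l : Fin 4) (hij : i ≠ j) (hil : i ≠ l)
    (hjl : j ≠ l) (h1 : val a b c k i = 0) (h2 : val a b c k j = 0) (h3 : val a b c k l = 0) :
    a.eval (S k) = 0 ∧ b.eval (S k) = 0 ∧ c.eval (S k) = 0 :=
  quad_zero (fun h => hij (x_inj k _ _ h)) (fun h => hil (x_inj k _ _ h))
      (fun h => hjl (x_inj k _ _ h)) h1 h2 h3

theorem poly_zero {t : ℕ} (ht : t ≤ 14) (p : degreeLT F t) (h : ∀ k, p.1.eval (S k) = 0) :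
    p = 0 := by
  apply Subtype.ext
  apply eq_zero_of_degree_lt_of_eval_index_eq_zero (s := Finset.univ) (v := S) (S_inj.injOn)
  · refine (mem_degreeLT.1 p.2).trans_le ?_
    simpa using ht
  · intro k _; exact h k

theorem ev_inj {t : ℕ} (ht : t ≤ 14) : Function.Injective (ev t) := by
  rw [injective_iff_map_eq_zero]
  intro g hg
  have hv : ∀ k j, val (g 0).1 (g 1).1 (g 2).1 k j = 0 := by
    intro k j; rw [← ev_apply, hg]; rfl
  have hk : ∀ k, _ := fun k => val_zero (k := k) 0 1 2 (by decide) (by decide) (by decide)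
    (hv k 0) (hv k 1) (hv k 2)
  funext i
  fin_cases i
  · exact poly_zero ht _ fun k => (hk k).1
  · exact poly_zero ht _ fun k => (hk k).2.1
  · exact poly_zero ht _ fun k => (hk k).2.2

theorem natDeg {t : ℕ} (h : 1 ≤ t) (p : degreeLT F t) : p.1.natDegree ≤ t - 1 := by
  have := mem_degreeLT.1 p.2
  by_cases hp : p.1 = 0
  · rw [hp]; simp
  · have := (natDegree_lt_iff_degree_lt hp).2 this
    omega

theorem dist {t : ℕ} (h1 : 1 ≤ t) (g : Fin 3 → degreeLT F t) (hg : g ≠ 0) :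
    56 - 4 * t ≤ Nat.card {i : Fin 56 // ev t g i ≠ 0} := by
  have hz := zeros_le (natDeg h1 (g 0)) (natDeg h1 (g 1)) (natDeg h1 (g 2)) (by
    rintro ⟨ha, hb, hc⟩
    apply hg
    funext i
    fin_cases i
    · exact Subtype.ext ha
    · exact Subtype.ext hb
    · exact Subtype.ext hc)
  have hcard : ∑ k, (Finset.univ.filter fun j => val (g 0).1 (g 1).1 (g 2).1 k j = 0).card
      = Fintype.card {i : Fin 56 // ev t g i = 0} := by
    rw [Fintype.card_subtype, Finset.card_filter]
    rw [← Equiv.sum_comp (finProdFinEquiv : Fin 14 × Fin 4 ≃ Fin 56), Fintype.sum_prod_type]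
    apply Finset.sum_congr rfl
    intro k _
    rw [Finset.card_filter]
    apply Finset.sum_congr rfl
    intro j _
    rw [← ev_apply]
  rw [Nat.card_eq_fintype_card, Fintype.card_subtype_compl, Fintype.card_fin, ← hcard]
  omega

theorem others : ∀ j : Fin 4, ∃ a b c : Fin 4, a ≠ b ∧ a ≠ c ∧ b ≠ c ∧ a ≠ j ∧ b ≠ j ∧ c ≠ j := by
  decide

theorem local3 (t : ℕ) (i : Fin 56) : ∃ I : Finset (Fin 56), i ∉ I ∧ I.card ≤ 3 ∧
    ∀ g, (∀ j ∈ I, ev t g j = 0) → ev t g i = 0 := by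
  obtain ⟨⟨k, j⟩, rfl⟩ := (finProdFinEquiv : Fin 14 × Fin 4 ≃ Fin 56).surjective i
  obtain ⟨a, b, c, hab, hac, hbc, ha, hb, hc⟩ := others j
  refine ⟨{(finProdFinEquiv (k, a) : Fin (14 * 4)), (finProdFinEquiv (k, b) : Fin (14 * 4)),
    (finProdFinEquiv (k, c) : Fin (14 * 4))}, ?_, Finset.card_le_three, ?_⟩
  · intro h
    simp only [Finset.mem_insert, Finset.mem_singleton] at h
    rcases h with h | h | h
    · exact ha (congrArg Prod.snd (finProdFinEquiv.injective h)).symm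
    · exact hb (congrArg Prod.snd (finProdFinEquiv.injective h)).symm
    · exact hc (congrArg Prod.snd (finProdFinEquiv.injective h)).symm
  · intro g h
    have h1 := h _ (Finset.mem_insert_self _ _)
    have h2 := h _ (Finset.mem_insert_of_mem (Finset.mem_insert_self _ _))
    have h3 := h _ (Finset.mem_insert_of_mem (Finset.mem_insert_of_mem
      (Finset.mem_singleton_self _)))
    rw [ev_apply] at h1 h2 h3
    obtain ⟨e1, e2, e3⟩ := val_zero a b c hab hac hbc h1 h2 h3
    refine (ev_apply t g k j).trans ?_
    rw [val, e1, e2, e3]; ring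

end LRC31

theorem exists_LRC_F31_length56 :
    ∀ t : ℕ, 1 ≤ t → t ≤ 14 →
      ∃ C : Submodule (ZMod 31) (Fin 56 → ZMod 31),
        Module.finrank (ZMod 31) C = 3 * t ∧
        (∀ x : Fin 56 → ZMod 31, x ∈ C → x ≠ 0 →
          56 - 4 * t ≤ Nat.card {i : Fin 56 // x i ≠ 0}) ∧
        (∀ i : Fin 56, ∃ I : Finset (Fin 56), i ∉ I ∧ I.card ≤ 3 ∧
          ∀ x ∈ C, ∀ y ∈ C, (∀ j ∈ I, x j = y j) → x i = y i) := by
  intro t h1 h14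
  haveI := LRC31.fact31
  refine ⟨LinearMap.range (LRC31.ev t), ?_, ?_, ?_⟩
  · rw [LinearMap.finrank_range_of_inj (LRC31.ev_inj h14)]
    rw [(LinearEquiv.piCongrRight fun _ : Fin 3 => degreeLTEquiv (ZMod 31) t).finrank_eq]
    simp [Module.finrank_pi_fintype]
  · rintro _ ⟨g, rfl⟩ hg
    exact LRC31.dist h1 g (by rintro rfl; simp at hg)
  · intro i
    obtain ⟨I, hi, hI, h⟩ := LRC31.local3 t i
    refine ⟨I, hi, hI, ?_⟩
    rintro _ ⟨g, rfl⟩ _ ⟨g', rfl⟩ he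
    have := h (g - g') (fun j hj => by
      rw [map_sub, Pi.sub_apply, he j hj, sub_self])
    rw [map_sub, Pi.sub_apply] at this
    exact sub_eq_zero.1 this
end
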